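/- Let q be a prime power, r ≥ 2, and let k be an integer with 0 ≤ k < q^{r-1}. Then the k+2 functions on the set of affine F_{q^r}-rational points of the Norm-Trace curve N_{q,r} given by (x,y) ↦ 1, (x,y) ↦ x, (x,y) ↦ x², …, (x,y) ↦ x^k, and (x,y) ↦ y are linearly independent over F_{q^r}; that is, if b ∈ F_{q^r} and a_0,…,a_k ∈ F_{q^r} satisfy b·y = a_k x^k + … + a_1 x + a_0 for all (x,y) ∈ F_{q^r}² with N(x) = T(y), then b = a_0 = a_1 = … = a_k = 0. -/

import Mathlib

/-! For a finite separable extension `L / K` of degree at least two, the trace `T` is surjective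
with nonzero kernel, so above each `x` lie at least two points `(x, y)` with `N x = T y`. If
`b * y = f x` at all of them, comparing two points above the same `x` gives `b = 0`, and then `f`
vanishes everywhere. A polynomial `f` of degree less than `#L` must therefore be zero. Over finite
fields, `N x` and `T y` are a power of `x` and a sum of powers of `y`. -/

section AddMonoidHom

variable {X R M : Type*} [NonUnitalNonAssocRing R] [NoZeroDivisors R] [AddGroup M]

theorem eq_zero_of_forall_map_eq_imp_mul_eq [Nonempty X] {T : R →+ M}
    (hsurj : Function.Surjective T) (hinj : ¬ Function.Injective T) {N : X → M} {f : X → R} {b : R}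
    (h : ∀ x y, N x = T y → b * y = f x) : b = 0 ∧ f = 0 := by
  have hb : b = 0 := by
    obtain ⟨z, hTz, hz⟩ : ∃ z, T z = 0 ∧ z ≠ 0 := by
      simpa [injective_iff_map_eq_zero] using hinj
    inhabit X
    obtain ⟨y, hy⟩ := hsurj (N default)
    have hbz : b * y + b * z = b * y := by
      rw [← mul_add, h default y hy.symm, h default (y + z) (by rw [map_add, hy, hTz, add_zero])]
    exact (mul_eq_zero.1 (add_eq_left.1 hbz)).resolve_right hz
  refine ⟨hb, funext fun x ↦ ?_⟩
  obtain ⟨y, hy⟩ := hsurj (N x)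
  rw [← h x y hy.symm, hb, zero_mul, Pi.zero_apply]

end AddMonoidHom

section FieldExtension

variable {K : Type*} [Field K]

theorem not_injective_trace_of_one_lt_finrank {A : Type*} [CommRing A] [Algebra K A]
    (hrank : 1 < Module.finrank K A) : ¬ Function.Injective (Algebra.trace K A) := by
  have : FiniteDimensional K A := Module.finite_of_finrank_pos (by lia)
  rw [← LinearMap.ker_eq_bot]
  exact LinearMap.ker_ne_bot_of_finrank_lt (by rwa [Module.finrank_self])

variable {L : Type*} [Field L] [Algebra K L]

theorem eq_zero_of_forall_norm_eq_trace_imp_mul_eq [Algebra.IsSeparable K L]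
    (hrank : 1 < Module.finrank K L) {f : L → L} {b : L}
    (h : ∀ x y : L, Algebra.norm K x = Algebra.trace K L y → b * y = f x) : b = 0 ∧ f = 0 :=
  have : FiniteDimensional K L := Module.finite_of_finrank_pos (by lia)
  eq_zero_of_forall_map_eq_imp_mul_eq (T := (Algebra.trace K L).toAddMonoidHom)
    (Algebra.trace_surjective K L) (not_injective_trace_of_one_lt_finrank hrank) h

theorem norm_eq_trace_iff_pow_eq_sum_pow [Finite L] (x y : L) :
    Algebra.norm K x = Algebra.trace K L y ↔
      x ^ ((Nat.card L - 1) / (Nat.card K - 1)) =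
        ∑ i ∈ Finset.range (Module.finrank K L), y ^ Nat.card K ^ i := by
  rw [← (algebraMap K L).injective.eq_iff, FiniteField.algebraMap_norm_eq_pow,
    FiniteField.algebraMap_trace_eq_sum_pow]

end FieldExtension

theorem exists_subfield_natCard_eq {F : Type*} [Field F] [Finite F] {q r : ℕ} (hr : r ≠ 0)
    (hF : Nat.card F = q ^ r) : ∃ K : Subfield F, Nat.card K = q := by
  have := Fintype.ofFinite F
  obtain ⟨p, m, hp, hm, rfl⟩ : IsPrimePow q := by
    rw [← isPrimePow_pow_iff hr, ← hF, Nat.card_eq_fintype_card]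
    exact FiniteField.isPrimePow_card F
  rw [← Nat.prime_iff] at hp
  have : Fact p.Prime := ⟨hp⟩
  rw [← pow_mul] at hF
  have : CharP F p := charP_of_card_eq_prime_pow (by rwa [← Nat.card_eq_fintype_card])
  let _ : Algebra (ZMod p) F := ZMod.algebra F p
  have hrank : Module.finrank (ZMod p) F = m * r :=
    Nat.pow_right_injective hp.two_le <| by
      simp only [FiniteField.pow_finrank_eq_natCard, hF]
  obtain ⟨φ⟩ : Nonempty (GaloisField p m →ₐ[ZMod p] F) :=
    FiniteField.nonempty_algHom_of_finrank_dvd <| by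
      rw [GaloisField.finrank p hm.ne', hrank]
      exact dvd_mul_right m r
  exact ⟨φ.toRingHom.fieldRange, by
    rw [← GaloisField.card p m hm.ne']
    exact Nat.card_congr (Equiv.ofInjective φ φ.injective).symm⟩

open Polynomial in
theorem coeff_eq_zero_of_sum_mul_pow_eq_zero {R : Type*} [CommRing R] [IsDomain R] {n : ℕ}
    {s : Finset R} (hn : n ≤ s.card) {a : ℕ → R}
    (h : ∀ x ∈ s, ∑ i ∈ Finset.range n, a i * x ^ i = 0) : ∀ i ∈ Finset.range n, a i = 0 := by
  intro i hi
  have hzero : ∑ j : Fin n, C (a j) * X ^ (j : ℕ) = 0 := by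
    refine eq_zero_of_degree_lt_of_eval_finset_eq_zero s ?_ fun x hx ↦ ?_
    · exact (degree_sum_fin_lt fun j : Fin n ↦ a j).trans_le (by exact_mod_cast hn)
    · rw [Fin.sum_univ_eq_sum_range (fun j ↦ C (a j) * X ^ j), eval_finsetSum]
      simpa only [eval_mul, eval_C, eval_pow, eval_X] using h x hx
  rw [Fin.sum_univ_eq_sum_range (fun j ↦ C (a j) * X ^ j)] at hzero
  simpa [finsetSum_coeff, coeff_C_mul_X_pow, Finset.mem_range.1 hi] using
    congrArg (coeff · i) hzero

theorem stmt_19_general {q r k : ℕ} (hr : 2 ≤ r) (hk : k < q ^ r)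
    {F : Type*} [Field F] [Fintype F] (hF : Fintype.card F = q ^ r) {b : F} {a : ℕ → F}
    (h : ∀ x y : F, x ^ ((q ^ r - 1) / (q - 1)) = ∑ i ∈ Finset.range r, y ^ q ^ i →
      b * y = ∑ i ∈ Finset.range (k + 1), a i * x ^ i) :
    b = 0 ∧ ∀ i ∈ Finset.range (k + 1), a i = 0 := by
  rw [← Nat.card_eq_fintype_card] at hF
  obtain ⟨K, rfl⟩ := exists_subfield_natCard_eq (by lia) hF
  obtain rfl : Module.finrank K F = r :=
    Nat.pow_right_injective (Finite.one_lt_card (α := K)) <| by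
      simp only [← Module.natCard_eq_pow_finrank, hF]
  obtain ⟨hb, hf⟩ := eq_zero_of_forall_norm_eq_trace_imp_mul_eq (K := K) hr fun x y hxy ↦
    h x y (by rwa [← hF, ← norm_eq_trace_iff_pow_eq_sum_pow])
  refine ⟨hb, coeff_eq_zero_of_sum_mul_pow_eq_zero (s := Finset.univ) ?_ fun x _ ↦ congrFun hf x⟩
  rwa [Finset.card_univ, ← Nat.card_eq_fintype_card, hF]

/-- For `0 ≤ k < q^{r-1}`, the functions `1, x, x², …, x^k, y` on the set of affine
`F_{q^r}`-rational points of the Norm-Trace curve are linearly independent over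
`F_{q^r}`. -/
theorem stmt_19 (p m r k : ℕ) (hp : p.Prime) (hm : 0 < m) (hr : 2 ≤ r)
    (q : ℕ) (hq : q = p ^ m) (hk : k < q ^ (r - 1))
    (F : Type) [Field F] [Fintype F] (hF : Fintype.card F = q ^ r)
    (b : F) (a : ℕ → F)
    (h : ∀ x y : F, x ^ ((q ^ r - 1) / (q - 1)) = ∑ i ∈ Finset.range r, y ^ q ^ i →
      b * y = ∑ i ∈ Finset.range (k + 1), a i * x ^ i) :
    b = 0 ∧ ∀ i ∈ Finset.range (k + 1), a i = 0 :=
  stmt_19_general hr (hk.trans_le (Nat.pow_le_pow_right (hq ▸ pow_pos hp.pos m) (r.sub_le 1))) hF h
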